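/- Let τ = (−1 − i·√7)/2 and let p = 8 or p = 12. Then the lattice S(p,τ) is generated by the union of two mirror stabilizers: the subgroup of GL(3,ℂ) generated by Stab(m₁) ∪ Stab(m₂) equals S(p,τ), where m₁ is the mirror of the complex reflection R₁ and m₂ = span_ℂ{e₁, R₃⁻¹·e₂} is the mirror of the complex reflection (R₁·R₃⁻¹R₂R₃)³. -/

import Mathlib

open Matrix

noncomputable section

/-- `u = exp(2πi/(3p))`. -/
def uPar (p : ℕ) : ℂ := Complex.exp (2 * Real.pi * Complex.I / (3 * p))

/-- `α = 2 − u³ − conj(u)³`. -/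
def alphaPar (p : ℕ) : ℂ :=
  2 - uPar p ^ 3 - starRingEnd ℂ (uPar p) ^ 3

/-- `β = (conj(u)² − u)·τ`. -/
def betaPar (p : ℕ) (τ : ℂ) : ℂ := (starRingEnd ℂ (uPar p) ^ 2 - uPar p) * τ

/-- The generator `R₁` of `S(p,τ)`. -/
def R1S (p : ℕ) (τ : ℂ) : Matrix (Fin 3) (Fin 3) ℂ :=
  !![uPar p ^ 2, τ, -(uPar p) * starRingEnd ℂ τ;
     0, starRingEnd ℂ (uPar p), 0;
     0, 0, starRingEnd ℂ (uPar p)]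

/-- The reflection `R₂ = J·R₁·J⁻¹` of `S(p,τ)`. -/
def R2S (p : ℕ) (τ : ℂ) : Matrix (Fin 3) (Fin 3) ℂ :=
  !![starRingEnd ℂ (uPar p), 0, 0;
     -(uPar p) * starRingEnd ℂ τ, uPar p ^ 2, τ;
     0, 0, starRingEnd ℂ (uPar p)]

/-- The reflection `R₃ = J·R₂·J⁻¹` of `S(p,τ)`. -/
def R3S (p : ℕ) (τ : ℂ) : Matrix (Fin 3) (Fin 3) ℂ :=
  !![starRingEnd ℂ (uPar p), 0, 0;
     0, starRingEnd ℂ (uPar p), 0;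
     τ, -(uPar p) * starRingEnd ℂ τ, uPar p ^ 2]

/-- The cyclic permutation matrix `J`. -/
def Jmat : Matrix (Fin 3) (Fin 3) ℂ :=
  !![0, 0, 1; 1, 0, 0; 0, 1, 0]

/-- The linear functional `x ↦ a·x₁ + b·x₂ + c·x₃` on `ℂ³`. -/
def lfun (a b c : ℂ) : (Fin 3 → ℂ) →ₗ[ℂ] ℂ :=
  a • (LinearMap.proj 0 : (Fin 3 → ℂ) →ₗ[ℂ] ℂ) +
    b • (LinearMap.proj 1 : (Fin 3 → ℂ) →ₗ[ℂ] ℂ) +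
    c • (LinearMap.proj 2 : (Fin 3 → ℂ) →ₗ[ℂ] ℂ)

/-- The mirror of `R₁`: `{x ∈ ℂ³ : α·x₁ + β·x₂ + conj(β)·x₃ = 0}`,
the `H`-orthogonal complement of `e₁`. -/
def mirror1 (p : ℕ) (τ : ℂ) : Submodule ℂ (Fin 3 → ℂ) :=
  LinearMap.ker (lfun (alphaPar p) (betaPar p τ) (starRingEnd ℂ (betaPar p τ)))

/-- The stabilizer of a subspace `m` of `ℂ³` inside a subgroup `S` of `GL(3,ℂ)`:
the set of elements of `S` mapping `m` onto itself. -/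
def mirrorStab (S : Subgroup (GL (Fin 3) ℂ)) (m : Submodule ℂ (Fin 3 → ℂ)) :
    Set (GL (Fin 3) ℂ) :=
  {g | g ∈ S ∧ m.map (Matrix.mulVecLin (g : Matrix (Fin 3) (Fin 3) ℂ)) = m}

end

/-!
Write `T` for the subgroup generated by the two stabilizers; since `R₁ ∈ T`, it suffices to find
some power of `R₁J`, of exponent prime to `7`, in `T`, because `(R₁J)⁷ = 1`: the characteristic
polynomial `X³ − τX² + conj(τ)X − 1` of `R₁J` divides `X⁷ − 1`. The braid relation
`R₁R₂R₁R₂ = R₂R₁R₂R₁`, its conjugates by `J` and `(R₁J)³ = R₁R₂R₃` give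
`(R₁J)² = (R₂R₁R₂)(R₃R₁R₃) R₁ (R₃⁻¹R₂R₃) R₁`. Again by the braid relations, `R₂R₁R₂` and `R₃R₁R₃`
commute with `R₁`, hence preserve its mirror, which is an eigenspace of `R₁`. The reflection
`R₃⁻¹R₂R₃` preserves every subspace that contains its root `R₃⁻¹e₂`, in particular the second
mirror.
-/

lemma val_eq_of_semiconjBy {M : Type*} [Monoid M] {a x y : Mˣ} {z : M}
    (hy : SemiconjBy a x y) (hz : SemiconjBy (a : M) x z) : (y : M) = z :=
  a.mul_left_inj.1 (hy.units_val.eq.symm.trans hz.eq)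

section BraidRelations

variable {G : Type*} [Group G] {r₁ r₂ r₃ j : G}

lemma commute_of_semiconjBy {a b a' b' g : G} (h : Commute a b) (ha : SemiconjBy g a a')
    (hb : SemiconjBy g b b') : Commute a' b' := by
  rw [← mul_inv_eq_iff_eq_mul.2 ha.eq, ← mul_inv_eq_iff_eq_mul.2 hb.eq]
  exact (Commute.conj_iff g).2 h

lemma mem_of_semiconjBy {S : Subgroup G} {g a b : G} (h : SemiconjBy g a b) (hg : g ∈ S)
    (ha : a ∈ S) : b ∈ S :=
  mul_inv_eq_iff_eq_mul.2 h.eq ▸ mul_mem (mul_mem hg ha) (inv_mem hg)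

lemma commute_mul_mul_swap {a b : G} (h : Commute a (b * a * b)) : Commute b (a * b * a) := by
  simpa only [commute_iff_eq, mul_assoc] using h.eq.symm

lemma semiconjBy_of_pow_three_eq_one (hj : j ^ 3 = 1) (h₁₂ : SemiconjBy j r₁ r₂)
    (h₂₃ : SemiconjBy j r₂ r₃) : SemiconjBy j r₃ r₁ := by
  have h₃₁ : SemiconjBy (j ^ 2)⁻¹ r₃ r₁ := (pow_two j ▸ h₂₃.mul_left h₁₂).inv_symm_left
  rwa [inv_eq_of_mul_eq_one_right ((pow_succ j 2).symm.trans hj)] at h₃₁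

lemma commute_mul_mul_of_cyclic (hj : j ^ 3 = 1) (h₁₂ : SemiconjBy j r₁ r₂)
    (h₂₃ : SemiconjBy j r₂ r₃) (hbraid : Commute r₁ (r₂ * r₁ * r₂)) :
    Commute r₁ (r₃ * r₁ * r₃) := by
  have h₁₃ : SemiconjBy (j * j) r₁ r₃ := h₂₃.mul_left h₁₂
  have h₂₁ : SemiconjBy (j * j) r₂ r₁ := (semiconjBy_of_pow_three_eq_one hj h₁₂ h₂₃).mul_left h₂₃
  exact commute_mul_mul_swap
    (commute_of_semiconjBy hbraid h₁₃ ((h₂₁.mul_right h₁₃).mul_right h₂₁))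

lemma mul_pow_three_of_cyclic (hj : j ^ 3 = 1) (h₁₂ : SemiconjBy j r₁ r₂)
    (h₂₃ : SemiconjBy j r₂ r₃) : (r₁ * j) ^ 3 = r₁ * r₂ * r₃ :=
  calc (r₁ * j) ^ 3
    _ = r₁ * (j * r₁) * (j * r₁) * j := by simp only [pow_three, mul_assoc]
    _ = r₁ * r₂ * (j * r₂) * j * j := by simp only [h₁₂.eq, mul_assoc]
    _ = r₁ * r₂ * r₃ * j ^ 3 := by simp only [h₂₃.eq, pow_three, mul_assoc]
    _ = r₁ * r₂ * r₃ := by rw [hj, mul_one]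

lemma mul_sq_of_pow_seven_eq_one (hj : j ^ 3 = 1) (h₁₂ : SemiconjBy j r₁ r₂)
    (h₂₃ : SemiconjBy j r₂ r₃) (hbraid : Commute r₁ (r₂ * r₁ * r₂)) (h7 : (r₁ * j) ^ 7 = 1) :
    (r₁ * j) ^ 2 = (r₂ * r₁ * r₂) * (r₃ * r₁ * r₃) * r₁ * (r₃⁻¹ * r₂ * r₃) * r₁ := by
  have hbraid₁₃ : Commute r₁ (r₃ * r₁ * r₃) := commute_mul_mul_of_cyclic hj h₁₂ h₂₃ hbraid
  have h6 : (r₁ * r₂ * r₃) ^ 2 = (r₁ * j)⁻¹ := by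
    rw [← mul_pow_three_of_cyclic hj h₁₂ h₂₃, ← pow_mul]
    exact eq_inv_of_mul_eq_one_left ((pow_succ _ 6).symm.trans h7)
  have hj_inv : j⁻¹ = j ^ 2 := inv_eq_of_mul_eq_one_left ((pow_succ j 2).symm.trans hj)
  symm
  calc (r₂ * r₁ * r₂) * (r₃ * r₁ * r₃) * r₁ * (r₃⁻¹ * r₂ * r₃) * r₁
    _ = (r₂ * r₁ * r₂) * (r₃ * r₁ * r₃ * r₁) * r₃⁻¹ * r₂ * r₃ * r₁ := by simp only [mul_assoc]
    _ = (r₂ * r₁ * r₂ * r₁) * r₃ * r₁ * r₂ * r₃ * r₁ := by rw [hbraid₁₃.symm.eq]; group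
    _ = r₁ * r₂ * (r₁ * r₂ * r₃) ^ 2 * r₁ := by
      rw [hbraid.symm.eq]; simp only [pow_two, mul_assoc]
    _ = r₁ * r₂ * j⁻¹ := by rw [h6]; group
    _ = r₁ * (r₂ * j) * j := by rw [hj_inv]; simp only [pow_two, mul_assoc]
    _ = (r₁ * j) ^ 2 := by rw [← h₁₂.eq]; simp only [pow_two, mul_assoc]

lemma mem_of_pow_seven_eq_one (hj : j ^ 3 = 1) (h₁₂ : SemiconjBy j r₁ r₂)
    (h₂₃ : SemiconjBy j r₂ r₃) (hbraid : Commute r₁ (r₂ * r₁ * r₂)) (h7 : (r₁ * j) ^ 7 = 1)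
    {T : Subgroup G} (hr₁ : r₁ ∈ T) (h₂₁₂ : r₂ * r₁ * r₂ ∈ T) (h₃₁₃ : r₃ * r₁ * r₃ ∈ T)
    (hconj : r₃⁻¹ * r₂ * r₃ ∈ T) : j ∈ T := by
  have hsq : (r₁ * j) ^ 2 ∈ T := by
    rw [mul_sq_of_pow_seven_eq_one hj h₁₂ h₂₃ hbraid h7]
    exact mul_mem (mul_mem (mul_mem (mul_mem h₂₁₂ h₃₁₃) hr₁) hconj) hr₁
  have hrj : r₁ * j = ((r₁ * j) ^ 2) ^ 4 := by rw [← pow_mul, pow_succ, h7, one_mul]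
  exact (T.mul_mem_cancel_left hr₁).1 (hrj ▸ pow_mem hsq 4)

end BraidRelations

section MirrorStab

variable {S : Subgroup (GL (Fin 3) ℂ)} {m : Submodule ℂ (Fin 3 → ℂ)} {g r : GL (Fin 3) ℂ}

lemma mem_mirrorStab_of_mapsTo (hg : g ∈ S)
    (h : Set.MapsTo (mulVecLin (g : Matrix (Fin 3) (Fin 3) ℂ)) m m) : g ∈ mirrorStab S m := by
  refine ⟨hg, Submodule.eq_of_le_of_finrank_eq (Submodule.map_le_iff_le_comap.2 h) ?_⟩
  exact (Submodule.equivMapOfInjective _ (mulVec_injective_of_isUnit g.isUnit) m).finrank_eq.symm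

lemma mem_mirrorStab_eigenspace_of_commute (hg : g ∈ S) (hrg : Commute r g) (c : ℂ) :
    g ∈ mirrorStab S (Module.End.eigenspace (mulVecLin (r : Matrix (Fin 3) (Fin 3) ℂ)) c) :=
  mem_mirrorStab_of_mapsTo hg <| Module.End.mapsTo_genEigenspace_of_comm
    ((hrg.map (Units.coeHom _)).map (Matrix.toLinAlgEquiv' (R := ℂ) (n := Fin 3))) c 1

lemma conj_mem_mirrorStab_of_root_mem {φ : (Fin 3 → ℂ) →ₗ[ℂ] ℂ} {c : ℂ} {w : Fin 3 → ℂ}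
    (hr : ∀ x, (r : Matrix (Fin 3) (Fin 3) ℂ) *ᵥ x = c • x + φ x • w)
    (hg : g⁻¹ * r * g ∈ S) (hw : (g : Matrix (Fin 3) (Fin 3) ℂ)⁻¹ *ᵥ w ∈ m) :
    g⁻¹ * r * g ∈ mirrorStab S m := by
  refine mem_mirrorStab_of_mapsTo hg fun x hx ↦ ?_
  have hconj : mulVecLin ((g⁻¹ * r * g : GL (Fin 3) ℂ) : Matrix (Fin 3) (Fin 3) ℂ) x =
      c • x + φ ((g : Matrix (Fin 3) (Fin 3) ℂ) *ᵥ x) •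
        (g : Matrix (Fin 3) (Fin 3) ℂ)⁻¹ *ᵥ w := by
    have hg' : IsUnit (g : Matrix (Fin 3) (Fin 3) ℂ).det := (isUnit_iff_isUnit_det _).1 g.isUnit
    rw [mulVecLin_apply, Units.val_mul, Units.val_mul, ← mulVec_mulVec, ← mulVec_mulVec, hr,
      coe_units_inv, mulVec_add, mulVec_smul, mulVec_smul, mulVec_mulVec, nonsing_inv_mul _ hg',
      one_mulVec]
  rw [SetLike.mem_coe, hconj]
  exact m.add_mem (m.smul_mem _ hx) (m.smul_mem _ hw)

lemma closure_mirrorStab_union_eq {r₁ r₂ r₃ j : GL (Fin 3) ℂ} {φ : (Fin 3 → ℂ) →ₗ[ℂ] ℂ} {c : ℂ}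
    {w : Fin 3 → ℂ} (hj : j ^ 3 = 1) (h₁₂ : SemiconjBy j r₁ r₂) (h₂₃ : SemiconjBy j r₂ r₃)
    (hbraid : Commute r₁ (r₂ * r₁ * r₂)) (h7 : (r₁ * j) ^ 7 = 1)
    (hr₂ : ∀ x, (r₂ : Matrix (Fin 3) (Fin 3) ℂ) *ᵥ x = c • x + φ x • w)
    (hw : (r₃ : Matrix (Fin 3) (Fin 3) ℂ)⁻¹ *ᵥ w ∈ m) (μ : ℂ) :
    Subgroup.closure
        (mirrorStab (Subgroup.closure {r₁, j})
            (Module.End.eigenspace (mulVecLin (r₁ : Matrix (Fin 3) (Fin 3) ℂ)) μ) ∪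
          mirrorStab (Subgroup.closure {r₁, j}) m) =
      Subgroup.closure {r₁, j} := by
  set S := Subgroup.closure {r₁, j}
  set T := Subgroup.closure (mirrorStab S _ ∪ mirrorStab S m)
  have hr₁S : r₁ ∈ S := Subgroup.subset_closure (by simp)
  have hjS : j ∈ S := Subgroup.subset_closure (by simp)
  have hr₂S : r₂ ∈ S := mem_of_semiconjBy h₁₂ hjS hr₁S
  have hr₃S : r₃ ∈ S := mem_of_semiconjBy h₂₃ hjS hr₂S
  have mem_of_commute {g} (hg : g ∈ S) (h : Commute r₁ g) : g ∈ T :=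
    Subgroup.subset_closure (.inl (mem_mirrorStab_eigenspace_of_commute hg h μ))
  have hr₁T : r₁ ∈ T := mem_of_commute hr₁S (.refl r₁)
  have h₂₁₂ : r₂ * r₁ * r₂ ∈ T := mem_of_commute (mul_mem (mul_mem hr₂S hr₁S) hr₂S) hbraid
  have h₃₁₃ : r₃ * r₁ * r₃ ∈ T := mem_of_commute (mul_mem (mul_mem hr₃S hr₁S) hr₃S)
    (commute_mul_mul_of_cyclic hj h₁₂ h₂₃ hbraid)
  have hconj : r₃⁻¹ * r₂ * r₃ ∈ T := Subgroup.subset_closure <| .inr <|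
    conj_mem_mirrorStab_of_root_mem hr₂ (mul_mem (mul_mem (inv_mem hr₃S) hr₂S) hr₃S) hw
  have hjT : j ∈ T := mem_of_pow_seven_eq_one hj h₁₂ h₂₃ hbraid h7 hr₁T h₂₁₂ h₃₁₃ hconj
  apply le_antisymm
  · exact (Subgroup.closure_le S).2 (Set.union_subset (fun _ h ↦ h.1) fun _ h ↦ h.1)
  · exact (Subgroup.closure_le T).2 (Set.pair_subset hr₁T hjT)

end MirrorStab

section Reflections

open ComplexConjugate Polynomial

variable {p : ℕ} {τ : ℂ}

lemma uPar_mul_conj (p : ℕ) : uPar p * conj (uPar p) = 1 := by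
  have h : uPar p = Complex.exp ((2 * Real.pi / (3 * p) : ℝ) * Complex.I) := by
    rw [uPar]; congr 1; push_cast; ring
  rw [Complex.mul_conj', h, Complex.norm_exp_ofReal_mul_I, Complex.ofReal_one, one_pow]

lemma uPar_pow_three_ne_one (hp : 2 ≤ p) : uPar p ^ 3 ≠ 1 := by
  have h : uPar p ^ 3 = Complex.exp (2 * Real.pi * Complex.I / p) := by
    rw [uPar, ← Complex.exp_nat_mul]; congr 1; field_simp; norm_num
  exact h ▸ (Complex.isPrimitiveRoot_exp p (by lia)).ne_one hp

lemma smul_lfun (k a b c : ℂ) : k • lfun a b c = lfun (k * a) (k * b) (k * c) := by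
  simp only [lfun, smul_add, smul_smul]

lemma R1S_mulVec (p : ℕ) (τ : ℂ) (x : Fin 3 → ℂ) :
    R1S p τ *ᵥ x = conj (uPar p) • x +
      lfun (uPar p ^ 2 - conj (uPar p)) τ (-uPar p * conj τ) x • Pi.single 0 1 := by
  ext i
  fin_cases i <;> simp [R1S, lfun, mulVec, dotProduct, Fin.sum_univ_three, sub_mul, ← add_assoc]

lemma R2S_mulVec (p : ℕ) (τ : ℂ) (x : Fin 3 → ℂ) :
    R2S p τ *ᵥ x = conj (uPar p) • x +
      lfun (-uPar p * conj τ) (uPar p ^ 2 - conj (uPar p)) τ x • Pi.single 1 1 := by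
  ext i
  fin_cases i <;> simp [R2S, lfun, mulVec, dotProduct, Fin.sum_univ_three, add_mul,
    sub_eq_add_neg, add_left_comm, add_assoc]

lemma lfun_alphaPar_betaPar (p : ℕ) (τ : ℂ) :
    lfun (alphaPar p) (betaPar p τ) (conj (betaPar p τ)) =
      (conj (uPar p) ^ 2 - uPar p) •
        lfun (uPar p ^ 2 - conj (uPar p)) τ (-uPar p * conj τ) := by
  have hu := uPar_mul_conj p
  rw [smul_lfun]
  congr 1
  · rw [alphaPar]; grind
  · rw [betaPar, map_mul, map_sub, map_pow, Complex.conj_conj]; grind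

lemma mirror1_eq_eigenspace (hp : 2 ≤ p) (τ : ℂ) :
    mirror1 p τ = Module.End.eigenspace (mulVecLin (R1S p τ)) (conj (uPar p)) := by
  have hc : conj (uPar p) ^ 2 - uPar p ≠ 0 := fun h ↦
    uPar_pow_three_ne_one hp (by grind [uPar_mul_conj p])
  ext x
  rw [Module.End.mem_eigenspace_iff, mulVecLin_apply, R1S_mulVec, add_eq_left]
  simp [mirror1, lfun_alphaPar_betaPar, hc]

lemma Jmat_pow_three : Jmat ^ 3 = 1 := by
  simp [pow_three, Jmat, one_fin_three]

lemma semiconjBy_Jmat_R1S_R2S (p : ℕ) (τ : ℂ) : SemiconjBy Jmat (R1S p τ) (R2S p τ) := by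
  simp [SemiconjBy, Jmat, R1S, R2S]

lemma semiconjBy_Jmat_R2S_R3S (p : ℕ) (τ : ℂ) : SemiconjBy Jmat (R2S p τ) (R3S p τ) := by
  simp [SemiconjBy, Jmat, R2S, R3S]

lemma commute_R1S_R2S_mul_R1S_mul_R2S (p : ℕ) (hτ : τ * conj τ = 2) :
    Commute (R1S p τ) (R2S p τ * R1S p τ * R2S p τ) := by
  have hu := uPar_mul_conj p
  simp only [commute_iff_eq, R1S, R2S, mul_fin_three]
  congr! 3 <;> grind

lemma charpoly_R1S_mul_Jmat (p : ℕ) (τ : ℂ) :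
    (R1S p τ * Jmat).charpoly = X ^ 3 - C τ * X ^ 2 + C (conj τ) * X - 1 := by
  have hu : C (uPar p) * C (conj (uPar p)) = 1 := by rw [← C_mul, uPar_mul_conj, C_1]
  have hchar : (R1S p τ * Jmat).charmatrix =
      !![X - C τ, C (uPar p) * C (conj τ), -C (uPar p) ^ 2;
        -C (conj (uPar p)), X, 0;
        0, -C (conj (uPar p)), X] := by
    ext i k : 2
    fin_cases i <;> fin_cases k <;> simp [R1S, Jmat]
  simp only [charpoly, hchar, det_fin_three, of_apply, cons_val]
  linear_combination (C (conj τ) * X - C (uPar p) * C (conj (uPar p)) - 1) * hu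

lemma cubic_dvd_X_pow_seven_sub_one {R : Type*} [CommRing R] {s t : R} (hadd : s + t = -1)
    (hmul : s * t = 2) : X ^ 3 - C s * X ^ 2 + C t * X - 1 ∣ (X ^ 7 - 1 : R[X]) := by
  have hCadd : (C s + C t : R[X]) = -1 := by rw [← C_add, hadd, C_neg, C_1]
  have hCmul : (C s * C t : R[X]) = 2 := by rw [← C_mul, hmul, C_ofNat]
  exact ⟨(X - 1) * (X ^ 3 - C t * X ^ 2 + C s * X - 1), by grind⟩

lemma add_conj_eq_neg_one (hτ : τ ^ 2 + τ + 2 = 0) : τ + conj τ = -1 := by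
  have hconj : conj τ ^ 2 + conj τ + 2 = 0 := by
    simpa only [map_add, map_pow, map_ofNat, map_zero] using congrArg conj hτ
  have hne : τ - conj τ ≠ 0 := fun h ↦ by
    obtain ⟨x, rfl⟩ := Complex.conj_eq_iff_real.1 (sub_eq_zero.1 h).symm
    have hx : x ^ 2 + x + 2 = 0 := mod_cast hτ
    nlinarith [sq_nonneg (x + 1 / 2)]
  refine mul_left_cancel₀ hne ?_
  linear_combination hτ - hconj

lemma mul_conj_eq_two (hτ : τ ^ 2 + τ + 2 = 0) : τ * conj τ = 2 := by
  linear_combination τ * add_conj_eq_neg_one hτ - hτ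

lemma R1S_mul_Jmat_pow_seven (p : ℕ) (hτ : τ ^ 2 + τ + 2 = 0) :
    (R1S p τ * Jmat) ^ 7 = 1 := by
  have h : aeval (R1S p τ * Jmat) (X ^ 7 - 1 : ℂ[X]) = 0 :=
    aeval_eq_zero_of_dvd_aeval_eq_zero
      (cubic_dvd_X_pow_seven_sub_one (add_conj_eq_neg_one hτ) (mul_conj_eq_two hτ))
      (charpoly_R1S_mul_Jmat p τ ▸ aeval_self_charpoly (R1S p τ * Jmat))
  simpa [sub_eq_zero] using h

lemma quadratic_neg_one_sub_I_mul_sqrt_seven :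
    ((-1 - Complex.I * Real.sqrt 7) / 2) ^ 2 + (-1 - Complex.I * Real.sqrt 7) / 2 + 2 = 0 := by
  have h7 : ((Real.sqrt 7 : ℝ) : ℂ) ^ 2 = 7 := mod_cast Real.sq_sqrt (by norm_num : (0 : ℝ) ≤ 7)
  linear_combination (1 / 4 : ℂ) * Complex.I ^ 2 * h7 + (7 / 4 : ℂ) * Complex.I_sq

end Reflections

theorem stmt13_general (p : ℕ) (hp : 2 ≤ p) (τ : ℂ) (hτ : τ ^ 2 + τ + 2 = 0)
    (r₁ j : GL (Fin 3) ℂ)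
    (hr₁ : (↑r₁ : Matrix (Fin 3) (Fin 3) ℂ) = R1S p τ)
    (hj : (↑j : Matrix (Fin 3) (Fin 3) ℂ) = Jmat) :
    Subgroup.closure
        (mirrorStab (Subgroup.closure {r₁, j}) (mirror1 p τ) ∪
          mirrorStab (Subgroup.closure {r₁, j})
            (Submodule.span ℂ
              {Pi.single 0 1, (R3S p τ)⁻¹.mulVec (Pi.single 1 1)})) =
      Subgroup.closure {r₁, j} := by
  obtain ⟨r₂, h₁₂⟩ : ∃ r₂, SemiconjBy j r₁ r₂ := ⟨_, .conj_mk j r₁⟩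
  obtain ⟨r₃, h₂₃⟩ : ∃ r₃, SemiconjBy j r₂ r₃ := ⟨_, .conj_mk j r₂⟩
  have hr₂ := val_eq_of_semiconjBy h₁₂ (hj ▸ hr₁ ▸ semiconjBy_Jmat_R1S_R2S p τ)
  have hr₃ := val_eq_of_semiconjBy h₂₃ (hj ▸ hr₂ ▸ semiconjBy_Jmat_R2S_R3S p τ)
  have hj3 : j ^ 3 = 1 := Units.ext (by simp [hj, Jmat_pow_three])
  have h7 : (r₁ * j) ^ 7 = 1 := Units.ext (by simp [hr₁, hj, R1S_mul_Jmat_pow_seven p hτ])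
  have hbraid : Commute r₁ (r₂ * r₁ * r₂) := Commute.units_of_val
    (by simpa [hr₁, hr₂] using commute_R1S_R2S_mul_R1S_mul_R2S p (mul_conj_eq_two hτ))
  rw [mirror1_eq_eigenspace hp, ← hr₁, ← hr₃]
  exact closure_mirrorStab_union_eq hj3 h₁₂ h₂₃ hbraid h7 (hr₂ ▸ R2S_mulVec p τ)
    (Submodule.subset_span (by simp)) _

/-- For `τ = (−1−i√7)/2` and `p = 8` or `12`, the lattice `S(p,τ)` is generated by
the union of the stabilizers of the mirror of `R₁` and of the mirror
`span{e₁, R₃⁻¹·e₂}` of the complex reflection `(R₁·R₃⁻¹R₂R₃)³`. -/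
theorem stmt13 (p : ℕ) (hp : p = 8 ∨ p = 12)
    (τ : ℂ) (hτ : τ = (-1 - Complex.I * Real.sqrt 7) / 2)
    (r₁ j : GL (Fin 3) ℂ)
    (hr₁ : (↑r₁ : Matrix (Fin 3) (Fin 3) ℂ) = R1S p τ)
    (hj : (↑j : Matrix (Fin 3) (Fin 3) ℂ) = Jmat) :
    Subgroup.closure
        (mirrorStab (Subgroup.closure {r₁, j}) (mirror1 p τ) ∪
          mirrorStab (Subgroup.closure {r₁, j})
            (Submodule.span ℂ
              {Pi.single 0 1, (R3S p τ)⁻¹.mulVec (Pi.single 1 1)})) =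
      Subgroup.closure {r₁, j} := by
  subst hτ
  exact stmt13_general p (by lia) _ quadratic_neg_one_sub_I_mul_sqrt_seven r₁ j hr₁ hj
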